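/- arXiv:math-ph/0109009 — 3 statements merged into one kernel-verified Lean document; each statement's English description precedes it below -/
import Mathlib

section
/- Let R be an associative unital ring. Let u : ℤ³ → R and let φ : ℤ³ → R take unit values, written φ_n(j,r), and satisfy φ_n(j, r−1) = φ_n(j, r) + u(n,j,r)·φ_{n−1}(j, r) for all n, j, r. Set σ(n,j,r) := φ_n(j,r)·φ_{n−1}(j,r)⁻¹ and u⁻(n,j,r) := u(n,j,r) − σ(n,j,r−1) + σ(n,j,r). Then for every ψ : ℤ³ → R satisfying ψ_n(j, r−1) = ψ_n(j, r) + u(n,j,r)·ψ_{n−1}(j, r) for all n, j, r, the Darboux transform ψ⁻_n(j,r) := ψ_n(j,r) − σ(n,j,r)·ψ_{n−1}(j,r) satisfies ψ⁻_n(j, r−1) = ψ⁻_n(j, r) + u⁻(n,j,r)·ψ⁻_{n−1}(j, r) for all n, j, r. -/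
/-!
Write `τ` for the shift `T⁻¹ : n ↦ n - 1` and `S` for the shift `r ↦ r - 1`, two commuting
endomorphisms of the ring of `R`-valued lattice functions. The linear problem is
`S f = f + u * τ f`, and since `σ * τ φ = φ`, for `φ` it reads `S φ = (u + σ) * τ φ`.
Substituting this on both sides of `S φ = S σ * τ (S φ)` and cancelling `τ (τ φ)` gives the Riccati
equation `S σ * τ (u + σ) = (u + σ) * τ σ`. In the form `S σ * τ u = (u - S σ + σ) * τ σ` it is
exactly what matches the coefficients of `τ (τ ψ)` in the transformed linear problem.
-/

section ShiftEndomorphisms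

variable {A : Type*} [NonUnitalRing A]

/-- Solutions of the linear problem `S f = f + u * τ f` with potential `u`, for abstract shift
endomorphisms `S` and `τ`; the lattice equation has `S : r ↦ r - 1` and `τ = T⁻¹ : n ↦ n - 1`. -/
def IsWaveFunction (S τ : A →ₙ+* A) (u f : A) : Prop :=
  S f = f + u * τ f

/-- The Darboux transformation of the second kind `ψ ↦ ψ⁻ = ψ - σ * T⁻¹ ψ`, with `τ` in the role
of `T⁻¹`. -/
def darbouxTransform (τ : A →ₙ+* A) (σ ψ : A) : A :=
  ψ - σ * τ ψ

/-- The potential `u⁻` of the linear problem solved by Darboux transforms of wave functions. -/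
def darbouxPotential (S : A →ₙ+* A) (u σ : A) : A :=
  u - S σ + σ

namespace IsWaveFunction

variable {S τ : A →ₙ+* A} {u φ σ ψ : A}

lemma map_eq_add_mul (hφ : IsWaveFunction S τ u φ) (hσ : σ * τ φ = φ) :
    S φ = (u + σ) * τ φ := by
  rw [hφ, add_mul, hσ, add_comm]

lemma riccati (hcomm : Function.Commute S τ) (hφ : IsWaveFunction S τ u φ)
    (hreg : IsRightRegular (τ (τ φ))) (hσ : σ * τ φ = φ) :
    S σ * τ (u + σ) = (u + σ) * τ σ := by
  have hSφ := hφ.map_eq_add_mul hσ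
  apply hreg
  calc S σ * τ (u + σ) * τ (τ φ)
      = S σ * τ (S φ) := by rw [mul_assoc, ← map_mul, hSφ]
    _ = S φ := by rw [← hcomm φ, ← map_mul, hσ]
    _ = (u + σ) * τ (σ * τ φ) := by rw [hσ, hSφ]
    _ = (u + σ) * τ σ * τ (τ φ) := by rw [map_mul, mul_assoc]

lemma darbouxTransform_of_mul_eq (hcomm : Function.Commute S τ)
    (hσ : S σ * τ u = darbouxPotential S u σ * τ σ) (hψ : IsWaveFunction S τ u ψ) :
    IsWaveFunction S τ (darbouxPotential S u σ) (darbouxTransform τ σ ψ) := by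
  have hτψ : S (τ ψ) = τ ψ + τ u * τ (τ ψ) := by rw [hcomm ψ, hψ, map_add, map_mul]
  calc S (ψ - σ * τ ψ)
      = ψ + u * τ ψ - S σ * (τ ψ + τ u * τ (τ ψ)) := by rw [map_sub, map_mul, hτψ, hψ]
    _ = ψ + (u - S σ) * τ ψ - S σ * τ u * τ (τ ψ) := by
      rw [mul_add, sub_mul, mul_assoc]; abel
    _ = ψ + (darbouxPotential S u σ - σ) * τ ψ
          - darbouxPotential S u σ * τ σ * τ (τ ψ) := by
      rw [hσ, darbouxPotential, add_sub_cancel_right]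
    _ = ψ - σ * τ ψ + darbouxPotential S u σ * τ (ψ - σ * τ ψ) := by
      rw [map_sub, map_mul, mul_sub, sub_mul, mul_assoc]; abel

end IsWaveFunction

lemma mul_eq_darbouxPotential_mul_iff_riccati {S τ : A →ₙ+* A} {u σ : A} :
    S σ * τ u = darbouxPotential S u σ * τ σ ↔ S σ * τ (u + σ) = (u + σ) * τ σ := by
  rw [darbouxPotential, sub_add_eq_add_sub, sub_mul, eq_sub_iff_add_eq, ← mul_add, ← map_add]

theorem lattice_darboux_covariance_second_kind_general {S τ : A →ₙ+* A}
    (hcomm : Function.Commute S τ) {u φ σ ψ : A} (hφ : IsWaveFunction S τ u φ)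
    (hreg : IsRightRegular (τ (τ φ))) (hσ : σ * τ φ = φ) (hψ : IsWaveFunction S τ u ψ) :
    IsWaveFunction S τ (darbouxPotential S u σ) (darbouxTransform τ σ ψ) :=
  hψ.darbouxTransform_of_mul_eq hcomm <|
    mul_eq_darbouxPotential_mul_iff_riccati.mpr (hφ.riccati hcomm hreg hσ)

end ShiftEndomorphisms

/-- Reindexing of functions of three discrete variables, one coordinate at a time; the variables are
kept curried so that lattice identities unfold definitionally. -/
def latticeReindex {I J K : Type*} (R : Type*) [NonUnitalNonAssocSemiring R]
    (a : I → I) (b : J → J) (c : K → K) : (I → J → K → R) →ₙ+* (I → J → K → R) where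
  toFun f i j k := f (a i) (b j) (c k)
  map_mul' _ _ := rfl
  map_zero' := rfl
  map_add' _ _ := rfl

/-- Darboux covariance of the second kind for the lattice equation
`f_n(j,r−1) = f_n(j,r) + u(n,j,r)·f_{n−1}(j,r)`: if the unit-valued `φ` is a particular
solution, `σ(n,j,r) = φ_n(j,r)·φ_{n−1}(j,r)⁻¹` and
`u⁻(n,j,r) = u(n,j,r) − σ(n,j,r−1) + σ(n,j,r)`, then for every solution `ψ` the Darboux
transform `ψ⁻_n(j,r) = ψ_n(j,r) − σ(n,j,r)·ψ_{n−1}(j,r)` solves the same equation with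
potential `u⁻`. -/
theorem lattice_darboux_covariance_second_kind {R : Type*} [Ring R]
    (u : ℤ → ℤ → ℤ → R) (φ : ℤ → ℤ → ℤ → Rˣ)
    (hφ : ∀ n j r : ℤ, (φ n j (r - 1) : R)
      = (φ n j r : R) + u n j r * (φ (n - 1) j r : R))
    (σ : ℤ → ℤ → ℤ → R)
    (hσ : ∀ n j r, σ n j r = (φ n j r : R) * (((φ (n - 1) j r)⁻¹ : Rˣ) : R))
    (um : ℤ → ℤ → ℤ → R)
    (hum : ∀ n j r, um n j r = u n j r - σ n j (r - 1) + σ n j r)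
    (ψ : ℤ → ℤ → ℤ → R)
    (hψ : ∀ n j r : ℤ, ψ n j (r - 1) = ψ n j r + u n j r * ψ (n - 1) j r)
    (ψm : ℤ → ℤ → ℤ → R)
    (hψm : ∀ n j r, ψm n j r = ψ n j r - σ n j r * ψ (n - 1) j r) :
    ∀ n j r : ℤ, ψm n j (r - 1) = ψm n j r + um n j r * ψm (n - 1) j r := by
  let τ := latticeReindex R (fun n : ℤ ↦ n - 1) (id : ℤ → ℤ) (id : ℤ → ℤ)
  let S := latticeReindex R (id : ℤ → ℤ) (id : ℤ → ℤ) (fun r : ℤ ↦ r - 1)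
  have hcomm : Function.Commute S τ := fun _ ↦ rfl
  let Φ : ℤ → ℤ → ℤ → R := fun n j r ↦ φ n j r
  obtain rfl : um = darbouxPotential S u σ := funext₃ hum
  obtain rfl : ψm = darbouxTransform τ σ ψ := funext₃ hψm
  have hΦ : IsWaveFunction S τ u Φ := funext₃ hφ
  have hreg : IsRightRegular (τ (τ Φ)) := by
    simp only [Pi.isRightRegular_iff]
    exact fun n j r ↦ (φ (n - 1 - 1) j r).isRegular.right
  have hσΦ : σ * τ Φ = Φ := funext₃ fun n j r ↦ by
    change σ n j r * φ (n - 1) j r = φ n j r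
    rw [hσ, Units.inv_mul_cancel_right]
  have hψ' : IsWaveFunction S τ u ψ := funext₃ hψ
  exact congr_fun₃ (lattice_darboux_covariance_second_kind_general hcomm hΦ hreg hσΦ hψ')
end

section
/- Let R be an associative unital ring. Let u : ℤ³ → R and let φ : ℤ³ → R take unit values, written φ_n(j,r), and satisfy φ_n(j, r−1) = φ_n(j, r) + u(n,j,r)·φ_{n−1}(j, r) for all n, j, r. Set σ(n,j,r) := φ_n(j,r)·φ_{n−1}(j,r)⁻¹. Then for all n, j, r: u(n,j,r)·σ(n−1,j,r) − σ(n,j,r−1)·u(n−1,j,r) = ( σ(n,j,r−1) − σ(n,j,r) )·σ(n−1,j,r). -/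
/-!
Write `S` for the shift `r ↦ r - 1` and `T` for `n ↦ n - 1`. Dividing the linear equation
`φ (S x) = φ x + u x * φ (T x)` on the right by `φ (T x)` shows that `σ x + u x` is the diagonal
quotient `φ (S x) / φ (T x)`. As `S` and `T` commute, the quotient `φ (S x) / φ (T (T x))`
telescopes both through `φ (T x)` and through `φ (S (T x))`; equating the two factorizations gives
`(σ x + u x) * σ (T x) = σ (S x) * (σ (T x) + u (T x))`, which rearranges to the relation.
-/

section DressingFactor

variable {ι R : Type*} {S T : ι → ι} {u : ι → R}

/-- The dressing factor of the second kind of a particular solution `φ`. The index set is an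
arbitrary type, and `T` stands for the backward shift `n ↦ n - 1`, written `T⁻¹` in the usual
formula `σ = φ * (T⁻¹ φ)⁻¹`. -/
def dressingFactor [Monoid R] (T : ι → ι) (φ : ι → Rˣ) (x : ι) : Rˣ :=
  φ x / φ (T x)

theorem div_mul_dressingFactor [Monoid R] (hST : Function.Commute S T) (φ : ι → Rˣ) (x : ι) :
    φ (S x) / φ (T x) * dressingFactor T φ (T x)
      = dressingFactor T φ (S x) * (φ (S (T x)) / φ (T (T x))) := by
  simp only [dressingFactor, hST x, div_mul_div_cancel]

theorem dressingFactor_add_potential [Semiring R] {φ : ι → Rˣ} {x : ι}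
    (hφ : (φ (S x) : R) = φ x + u x * φ (T x)) :
    dressingFactor T φ x + u x = ↑(φ (S x) / φ (T x)) := by
  simp only [dressingFactor, div_eq_mul_inv, Units.val_mul, hφ, add_mul,
    Units.mul_inv_cancel_right]

theorem dressingFactor_add_potential_mul [Semiring R] (hST : Function.Commute S T) {φ : ι → Rˣ}
    (hφ : ∀ x, (φ (S x) : R) = φ x + u x * φ (T x)) (x : ι) :
    (dressingFactor T φ x + u x) * dressingFactor T φ (T x)
      = dressingFactor T φ (S x) * (dressingFactor T φ (T x) + u (T x)) := by
  rw [dressingFactor_add_potential (hφ x), dressingFactor_add_potential (hφ (T x))]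
  exact_mod_cast div_mul_dressingFactor hST φ x

theorem lattice_miura_relation_general [Ring R] (hST : Function.Commute S T) {φ : ι → Rˣ}
    (hφ : ∀ x, (φ (S x) : R) = φ x + u x * φ (T x)) (x : ι) :
    u x * dressingFactor T φ (T x) - dressingFactor T φ (S x) * u (T x)
      = ((dressingFactor T φ (S x) : R) - dressingFactor T φ x) * dressingFactor T φ (T x) := by
  have h := dressingFactor_add_potential_mul hST hφ x
  rw [add_mul, mul_add] at h
  rw [sub_mul, sub_eq_sub_iff_add_eq_add, add_comm, h]

end DressingFactor

/-- For the lattice equation `f_n(j,r−1) = f_n(j,r) + u(n,j,r)·f_{n−1}(j,r)`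
with a unit-valued particular solution `φ` and dressing factor
`σ(n,j,r) = φ_n(j,r)·φ_{n−1}(j,r)⁻¹`, the generalized Miura-type relation
`u(n,j,r)·σ(n−1,j,r) − σ(n,j,r−1)·u(n−1,j,r) = (σ(n,j,r−1) − σ(n,j,r))·σ(n−1,j,r)` holds. -/
theorem lattice_miura_relation {R : Type*} [Ring R]
    (u : ℤ → ℤ → ℤ → R) (φ : ℤ → ℤ → ℤ → Rˣ)
    (hφ : ∀ n j r : ℤ, (φ n j (r - 1) : R)
      = (φ n j r : R) + u n j r * (φ (n - 1) j r : R))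
    (σ : ℤ → ℤ → ℤ → R)
    (hσ : ∀ n j r, σ n j r = (φ n j r : R) * (((φ (n - 1) j r)⁻¹ : Rˣ) : R)) :
    ∀ n j r : ℤ,
      u n j r * σ (n - 1) j r - σ n j (r - 1) * u (n - 1) j r
        = (σ n j (r - 1) - σ n j r) * σ (n - 1) j r := by
  intro n j r
  simpa only [hσ, dressingFactor, div_eq_mul_inv, Units.val_mul] using
    lattice_miura_relation_general
      (S := fun (n, j, r) ↦ (n, j, r - 1)) (T := fun (n, j, r) ↦ (n - 1, j, r)) (fun _ ↦ rfl)
      (u := fun (n, j, r) ↦ u n j r) (φ := fun (n, j, r) ↦ φ n j r)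
      (fun (n, j, r) ↦ hφ n j r) (n, j, r)
end

section
/- Let A be a unital Banach algebra with a continuous algebra automorphism T : A → A, and let u, v, w : ℝ → A. Let φ : ℝ → A be differentiable, unit-valued, and satisfy φ' = u·Tφ + v·φ + w·T⁻¹φ; set σ := (Tφ)·φ⁻¹. Let g : ℝ → A be differentiable and unit-valued. Define the transformed potentials u[1] := g·T(u)·(T(g))⁻¹, v[1] := g·T(v)·g⁻¹ − g·σ·u·g⁻¹ + g·T(u)·T(σ)·g⁻¹ + g'·g⁻¹, and w[1] := g·σ·w·(T⁻¹(g·σ))⁻¹. Then for every differentiable ψ : ℝ → A satisfying ψ' = u·Tψ + v·ψ + w·T⁻¹ψ, the function ψ[1] := g·(Tψ − σ·ψ) satisfies ψ[1]' = u[1]·T(ψ[1]) + v[1]·ψ[1] + w[1]·T⁻¹(ψ[1]). -/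
/-!
Write `L = uT + v + wT⁻¹`, `ρ = uσ + v + w(T⁻¹σ)⁻¹` and `δ = Tψ - σψ`. The solution `φ` satisfies
`Tφ = σφ`, hence `φ' = Lφ = ρφ`, and comparing the derivatives of `Tφ` and `σφ` gives the Riccati
equation `σ' = T(ρ)σ - σρ`. For any other solution `ψ`, the defect `Lψ - ρψ` depends only on `δ`: it
equals `uδ - w(T⁻¹σ)⁻¹T⁻¹δ`. Therefore
`δ' = T(Lψ) - (T(ρ)σ - σρ)ψ - σLψ = T(Lψ - ρψ) + T(ρ)δ - σ(Lψ - ρψ)`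
involves only `Tδ`, `δ` and `T⁻¹δ`, and the terms `∓T(w)σ⁻¹δ` of its first two summands cancel.
Multiplication by `g` is then an ordinary gauge transformation.
-/

open Filter Topology Asymptotics
open scoped Ring

theorem map_ringInverse {F M N : Type*} [MonoidWithZero M] [MonoidWithZero N] [FunLike F M N]
    [MonoidHomClass F M N] (f : F) {a : M} (ha : IsUnit a) : f a⁻¹ʳ = (f a)⁻¹ʳ := by
  rw [← (ha.map f).mul_right_inj, Ring.mul_inverse_cancel _ (ha.map f), ← map_mul,
    Ring.mul_inverse_cancel _ ha, map_one]

section ThreeTerm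

variable {R A : Type*} [CommSemiring R] [Ring A] [Algebra R A] (T : A ≃ₐ[R] A)

/-- The right-hand side `u·Tx + v·x + w·T⁻¹x` of the three-term lattice equation, at a fixed time:
`ψ` solves the equation when its derivative is `threeTerm T u v w ψ`. -/
def threeTerm (u v w x : A) : A :=
  u * T x + v * x + w * T.symm x

/-- The logarithmic derivative `ρ = u·σ + v + w·(T⁻¹σ)⁻¹` of a solution `φ` of the three-term
equation, in terms of `σ = (Tφ)·φ⁻¹`. The Riccati equation for `σ` is `σ' = T(ρ)·σ - σ·ρ`. It is
meant for a unit `σ`, since `Ring.inverse` vanishes on nonunits. -/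
noncomputable def riccatiCoeff (u v w σ : A) : A :=
  u * σ + v + w * (T.symm σ)⁻¹ʳ

theorem threeTerm_sub_riccatiCoeff_mul {σ : A} (hσ : IsUnit σ) (u v w x : A) :
    threeTerm T u v w x - riccatiCoeff T u v w σ * x =
      u * (T x - σ * x) - w * (T.symm σ)⁻¹ʳ * T.symm (T x - σ * x) := by
  have hσT : (T.symm σ)⁻¹ʳ * T.symm (T x - σ * x) = (T.symm σ)⁻¹ʳ * x - T.symm x := by
    rw [map_sub, map_mul, T.symm_apply_apply, mul_sub,
      Ring.inverse_mul_cancel_left _ _ (hσ.map T.symm)]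
  rw [mul_assoc w, hσT, threeTerm, riccatiCoeff]
  noncomm_ring

theorem threeTerm_eq_riccatiCoeff_mul {σ x : A} (hσ : IsUnit σ) (hx : T x = σ * x) (u v w : A) :
    threeTerm T u v w x = riccatiCoeff T u v w σ * x := by
  simpa [hx, sub_eq_zero] using threeTerm_sub_riccatiCoeff_mul T hσ u v w x

theorem threeTerm_darboux {σ : A} (hσ : IsUnit σ) (u v w x : A) :
    T (threeTerm T u v w x) - ((T (riccatiCoeff T u v w σ) * σ - σ * riccatiCoeff T u v w σ) * x +
        σ * threeTerm T u v w x) =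
      threeTerm T (T u) (T v - σ * u + T u * T σ) (σ * w * (T.symm σ)⁻¹ʳ) (T x - σ * x) := by
  set ρ := riccatiCoeff T u v w σ with hρ
  set δ := T x - σ * x with hδ
  have hLρ : threeTerm T u v w x - ρ * x = u * δ - w * (T.symm σ)⁻¹ʳ * T.symm δ :=
    threeTerm_sub_riccatiCoeff_mul T hσ u v w x
  have hTinv : T (T.symm σ)⁻¹ʳ = σ⁻¹ʳ := by
    rw [map_ringInverse T (hσ.map T.symm), T.apply_symm_apply]
  have hTρ : T ρ = T u * T σ + T v + T w * σ⁻¹ʳ := by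
    simp only [hρ, riccatiCoeff, map_add, map_mul, hTinv]
  calc
    _ = T (threeTerm T u v w x - ρ * x) + T ρ * δ - σ * (threeTerm T u v w x - ρ * x) := by
      rw [hδ, map_sub, map_mul]
      noncomm_ring
    _ = T u * T δ - T w * σ⁻¹ʳ * δ + (T u * T σ + T v + T w * σ⁻¹ʳ) * δ -
        σ * (u * δ - w * (T.symm σ)⁻¹ʳ * T.symm δ) := by
      rw [hLρ, hTρ]
      simp only [map_sub, map_mul, hTinv, T.apply_symm_apply]
    _ = _ := by
      rw [threeTerm]
      noncomm_ring

theorem threeTerm_gauge {g : A} (hg : IsUnit g) (g' u v w x : A) :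
    g' * x + g * threeTerm T u v w x =
      threeTerm T (g * u * (T g)⁻¹ʳ) (g * v * g⁻¹ʳ + g' * g⁻¹ʳ) (g * w * (T.symm g)⁻¹ʳ)
        (g * x) := by
  simp only [threeTerm, map_mul, add_mul, mul_add, mul_assoc,
    Ring.inverse_mul_cancel_left _ _ hg, Ring.inverse_mul_cancel_left _ _ (hg.map T),
    Ring.inverse_mul_cancel_left _ _ (hg.map T.symm)]
  abel

end ThreeTerm

section RingInverse

variable {A : Type*} [NormedRing A]

theorem norm_ringInverse_sub_ringInverse_le {a b : A} (ha : IsUnit a) (hb : IsUnit b)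
    (hab : ‖b - a‖ * ‖a⁻¹ʳ‖ ≤ 1 / 2) : ‖b⁻¹ʳ - a⁻¹ʳ‖ ≤ 2 * ‖a⁻¹ʳ‖ ^ 2 * ‖b - a‖ := by
  have hsub : ‖b⁻¹ʳ - a⁻¹ʳ‖ ≤ ‖b⁻¹ʳ‖ * (‖b - a‖ * ‖a⁻¹ʳ‖) := by
    rw [Ring.inverse_sub_inverse (iff_of_true hb ha), norm_sub_rev b a, mul_assoc]
    exact (norm_mul_le _ _).trans (by gcongr; exact norm_mul_le _ _)
  have hinv : ‖b⁻¹ʳ‖ ≤ ‖a⁻¹ʳ‖ + ‖b⁻¹ʳ - a⁻¹ʳ‖ := by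
    simpa using norm_add_le a⁻¹ʳ (b⁻¹ʳ - a⁻¹ʳ)
  have habsorb : ‖b⁻¹ʳ - a⁻¹ʳ‖ ≤
      ‖a⁻¹ʳ‖ * (‖b - a‖ * ‖a⁻¹ʳ‖) + ‖b⁻¹ʳ - a⁻¹ʳ‖ * (1 / 2) :=
    calc
      _ ≤ (‖a⁻¹ʳ‖ + ‖b⁻¹ʳ - a⁻¹ʳ‖) * (‖b - a‖ * ‖a⁻¹ʳ‖) := hsub.trans (by gcongr)
      _ ≤ _ := by
        rw [add_mul]
        gcongr
  linarith

theorem continuousOn_ringInverse : ContinuousOn Ring.inverse {a : A | IsUnit a} := by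
  intro a ha
  have hnorm : Tendsto (fun b ↦ ‖b - a‖) (𝓝[{b | IsUnit b}] a) (𝓝 0) :=
    tendsto_nhdsWithin_of_tendsto_nhds (tendsto_norm_sub_self a)
  have hsmall : ∀ᶠ b in 𝓝[{b | IsUnit b}] a, ‖b - a‖ * ‖a⁻¹ʳ‖ < 1 / 2 :=
    (hnorm.mul_const ‖a⁻¹ʳ‖).eventually_lt_const (by norm_num)
  have hbound : Tendsto (fun b ↦ 2 * ‖a⁻¹ʳ‖ ^ 2 * ‖b - a‖) (𝓝[{b | IsUnit b}] a) (𝓝 0) := by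
    simpa using hnorm.const_mul (2 * ‖a⁻¹ʳ‖ ^ 2)
  refine tendsto_iff_norm_sub_tendsto_zero.2
    (squeeze_zero' (.of_forall fun _ ↦ norm_nonneg _) ?_ hbound)
  filter_upwards [hsmall, self_mem_nhdsWithin] with b hb hbu
  exact norm_ringInverse_sub_ringInverse_le ha hbu hb.le

variable {𝕜 : Type*} [NontriviallyNormedField 𝕜] [NormedAlgebra 𝕜 A]

theorem hasFDerivWithinAt_ringInverse {a : A} (ha : IsUnit a) :
    HasFDerivWithinAt Ring.inverse (-ContinuousLinearMap.mulLeftRight 𝕜 A a⁻¹ʳ a⁻¹ʳ)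
      {b | IsUnit b} a := by
  have hinv : (fun b ↦ a⁻¹ʳ - b⁻¹ʳ) =o[𝓝[{b | IsUnit b}] a] fun _ ↦ (1 : ℝ) := by
    rw [isLittleO_one_iff]
    simpa using (continuousOn_ringInverse a ha).const_sub a⁻¹ʳ
  have hprod : (fun b ↦ (a⁻¹ʳ - b⁻¹ʳ) * ((b - a) * a⁻¹ʳ)) =o[𝓝[{b | IsUnit b}] a]
      fun b ↦ b - a := by
    have hmul : (fun b ↦ (b - a) * a⁻¹ʳ) =O[𝓝[{b | IsUnit b}] a] fun b ↦ ‖b - a‖ :=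
      .of_bound ‖a⁻¹ʳ‖ <| .of_forall fun b ↦ by
        simpa [mul_comm] using norm_mul_le (b - a) a⁻¹ʳ
    simpa using hinv.mul_isBigO hmul
  refine .of_isLittleO (hprod.congr' ?_ .rfl)
  filter_upwards [self_mem_nhdsWithin] with b hb
  rw [Ring.inverse_sub_inverse (iff_of_true hb ha)]
  simp only [neg_apply, ContinuousLinearMap.mulLeftRight_apply]
  noncomm_ring

theorem hasDerivAt_mul_ringInverse {χ φ : 𝕜 → A} {τ ρ : A} {t : 𝕜}
    (hχ : HasDerivAt χ (τ * χ t) t) (hφ : HasDerivAt φ (ρ * φ t) t)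
    (hφu : ∀ᶠ s in 𝓝 t, IsUnit (φ s)) :
    HasDerivAt (fun s ↦ χ s * (φ s)⁻¹ʳ) (τ * (χ t * (φ t)⁻¹ʳ) - χ t * (φ t)⁻¹ʳ * ρ) t := by
  have hφinv : HasDerivAt (fun s ↦ (φ s)⁻¹ʳ) (-((φ t)⁻¹ʳ * ρ)) t := by
    simpa [← mul_assoc, Ring.mul_inverse_cancel_right _ _ hφu.self_of_nhds] using!
      (hasFDerivWithinAt_ringInverse hφu.self_of_nhds).comp_hasDerivAt t hφ hφu
  refine (hχ.mul hφinv).congr_deriv ?_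
  noncomm_ring

end RingInverse

theorem hasDerivAt_linearMapClass_comp {𝕜 E F G : Type*} [NontriviallyNormedField 𝕜]
    [NormedAddCommGroup E] [NormedSpace 𝕜 E] [NormedAddCommGroup F] [NormedSpace 𝕜 F]
    [FunLike G E F] [LinearMapClass G 𝕜 E F] (L : G) (hL : Continuous L)
    {f : 𝕜 → E} {f' : E} {t : 𝕜}
    (hf : HasDerivAt f f' t) : HasDerivAt (fun s ↦ L (f s)) (L f') t :=
  (ContinuousLinearMap.mk (L : E →ₗ[𝕜] F) hL).hasFDerivAt.comp_hasDerivAt t hf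

section Derivative

variable {𝕜 A : Type*} [NontriviallyNormedField 𝕜] [NormedRing A] [NormedAlgebra 𝕜 A]
  (T : A ≃ₐ[𝕜] A) {u v w : A} {t : 𝕜}

theorem hasDerivAt_riccati (hT : Continuous T) {φ : 𝕜 → A} (hφu : ∀ᶠ s in 𝓝 t, IsUnit (φ s))
    (hφ : HasDerivAt φ (threeTerm T u v w (φ t)) t) {σ : 𝕜 → A}
    (hσ : ∀ s, σ s = T (φ s) * (φ s)⁻¹ʳ) :
    HasDerivAt σ
      (T (riccatiCoeff T u v w (σ t)) * σ t - σ t * riccatiCoeff T u v w (σ t)) t := by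
  have hφt : IsUnit (φ t) := hφu.self_of_nhds
  have hσu : IsUnit (σ t) := hσ t ▸ (hφt.map T).mul hφt.ringInverse
  have hTφ : T (φ t) = σ t * φ t := by rw [hσ, Ring.inverse_mul_cancel_right _ _ hφt]
  rw [threeTerm_eq_riccatiCoeff_mul T hσu hTφ] at hφ
  have hTφ' := hasDerivAt_linearMapClass_comp T hT hφ
  rw [map_mul] at hTφ'
  simpa only [← hσ] using hasDerivAt_mul_ringInverse hTφ' hφ hφu

theorem hasDerivAt_darboux (hT : Continuous T) {σ ψ : 𝕜 → A} (hσu : IsUnit (σ t))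
    (hσ : HasDerivAt σ
      (T (riccatiCoeff T u v w (σ t)) * σ t - σ t * riccatiCoeff T u v w (σ t)) t)
    (hψ : HasDerivAt ψ (threeTerm T u v w (ψ t)) t) :
    HasDerivAt (fun s ↦ T (ψ s) - σ s * ψ s)
      (threeTerm T (T u) (T v - σ t * u + T u * T (σ t)) (σ t * w * (T.symm (σ t))⁻¹ʳ)
        (T (ψ t) - σ t * ψ t)) t :=
  threeTerm_darboux T hσu u v w (ψ t) ▸ (hasDerivAt_linearMapClass_comp T hT hψ).sub (hσ.mul hψ)

theorem hasDerivAt_gauge {g ψ : 𝕜 → A} {g' : A} (hgu : IsUnit (g t)) (hg : HasDerivAt g g' t)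
    (hψ : HasDerivAt ψ (threeTerm T u v w (ψ t)) t) :
    HasDerivAt (fun s ↦ g s * ψ s)
      (threeTerm T (g t * u * (T (g t))⁻¹ʳ) (g t * v * (g t)⁻¹ʳ + g' * (g t)⁻¹ʳ)
        (g t * w * (T.symm (g t))⁻¹ʳ) (g t * ψ t)) t :=
  threeTerm_gauge T hgu g' u v w (ψ t) ▸ hg.mul hψ

theorem nahm_darboux_gauge_covariance_general (hT : Continuous T) {φ σ g ψ : 𝕜 → A} {g' : A}
    (hφu : ∀ᶠ s in 𝓝 t, IsUnit (φ s)) (hφ : HasDerivAt φ (threeTerm T u v w (φ t)) t)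
    (hσ : ∀ s, σ s = T (φ s) * (φ s)⁻¹ʳ) (hgu : IsUnit (g t)) (hg : HasDerivAt g g' t)
    (hψ : HasDerivAt ψ (threeTerm T u v w (ψ t)) t) :
    HasDerivAt (fun s ↦ g s * (T (ψ s) - σ s * ψ s))
      (threeTerm T (g t * T u * (T (g t))⁻¹ʳ)
        (g t * T v * (g t)⁻¹ʳ - g t * σ t * u * (g t)⁻¹ʳ + g t * T u * T (σ t) * (g t)⁻¹ʳ +
          g' * (g t)⁻¹ʳ)
        (g t * σ t * w * (T.symm (g t * σ t))⁻¹ʳ) (g t * (T (ψ t) - σ t * ψ t))) t := by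
  have hφt : IsUnit (φ t) := hφu.self_of_nhds
  have hσu : IsUnit (σ t) := hσ t ▸ (hφt.map T).mul hφt.ringInverse
  have hδ := hasDerivAt_darboux T hT hσu (hasDerivAt_riccati T hT hφu hφ hσ) hψ
  convert hasDerivAt_gauge T hgu hg hδ using 2
  · noncomm_ring
  · rw [map_mul, Ring.inverse_mul (.inl (hgu.map T.symm))]
    noncomm_ring

end Derivative

/-- Covariance of the three-term lattice equation
`ψ' = u·Tψ + v·ψ + w·T⁻¹ψ` under the combined Darboux–gauge transformation
`ψ[1] = g·(Tψ − σ·ψ)`, with `σ = (Tφ)·φ⁻¹` built from a unit-valued solution `φ` and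
`g` differentiable unit-valued, and transformed potentials
`u[1] = g·T(u)·(Tg)⁻¹`, `v[1] = g·T(v)·g⁻¹ − g·σ·u·g⁻¹ + g·T(u)·T(σ)·g⁻¹ + g'·g⁻¹`,
`w[1] = g·σ·w·(T⁻¹(g·σ))⁻¹`. -/
theorem nahm_darboux_gauge_covariance
    {A : Type*} [NormedRing A] [NormedAlgebra ℝ A] [CompleteSpace A]
    (T : A ≃+* A) (hT : Continuous T) (u v w : ℝ → A)
    (φ : ℝ → A) (hφu : ∀ t, IsUnit (φ t))
    (hφ : ∀ t, HasDerivAt φ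
      (u t * T (φ t) + v t * φ t + w t * T.symm (φ t)) t)
    (σ : ℝ → A) (hσ : ∀ t, σ t = T (φ t) * Ring.inverse (φ t))
    (g g' : ℝ → A) (hgu : ∀ t, IsUnit (g t)) (hg : ∀ t, HasDerivAt g (g' t) t)
    (u1 v1 w1 : ℝ → A)
    (hu1 : ∀ t, u1 t = g t * T (u t) * Ring.inverse (T (g t)))
    (hv1 : ∀ t, v1 t = g t * T (v t) * Ring.inverse (g t)
      - g t * σ t * u t * Ring.inverse (g t)
      + g t * T (u t) * T (σ t) * Ring.inverse (g t)
      + g' t * Ring.inverse (g t))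
    (hw1 : ∀ t, w1 t = g t * σ t * w t * Ring.inverse (T.symm (g t * σ t)))
    (ψ : ℝ → A)
    (hψ : ∀ t, HasDerivAt ψ
      (u t * T (ψ t) + v t * ψ t + w t * T.symm (ψ t)) t)
    (ψ1 : ℝ → A) (hψ1 : ∀ t, ψ1 t = g t * (T (ψ t) - σ t * ψ t)) :
    ∀ t, HasDerivAt ψ1
      (u1 t * T (ψ1 t) + v1 t * ψ1 t + w1 t * T.symm (ψ1 t)) t := by
  intro t
  rw [funext hψ1, hu1, hv1, hw1]
  exact nahm_darboux_gauge_covariance_general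
    (.ofRingEquiv (f := T) fun r ↦ by simp [Algebra.algebraMap_eq_smul_one, map_real_smul T hT])
    hT (.of_forall hφu) (hφ t) hσ (hgu t) (hg t) (hψ t)
end
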